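/- arXiv:2005.01150 — 11 statements merged into one kernel-verified Lean document; each statement's English description precedes it below -/
import Mathlib

section
/- Every lattice homomorphism T on ℓ^p (1 ≤ p < ∞) has a non-trivial closed invariant subspace; moreover, T has a non-trivial closed invariant ideal. -/
open scoped ENNReal

noncomputable section

/-- The `n`-th canonical unit vector of real `ℓᵖ`. -/
def e (p : ℝ≥0∞) (n : ℕ) : lp (fun _ : ℕ => ℝ) p := lp.single p n 1

/-- `T` is a lattice homomorphism: it sends coordinatewise suprema to
coordinatewise suprema. -/
def IsLatticeHom (p : ℝ≥0∞) [Fact (1 ≤ p)]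
    (T : lp (fun _ : ℕ => ℝ) p →L[ℝ] lp (fun _ : ℕ => ℝ) p) : Prop :=
  ∀ x y z : lp (fun _ : ℕ => ℝ) p,
    (∀ n, z n = max (x n) (y n)) → ∀ n, (T z) n = max ((T x) n) ((T y) n)

/-- `T` is a positive operator for the coordinatewise order. -/
def IsPositiveOp (p : ℝ≥0∞) [Fact (1 ≤ p)]
    (T : lp (fun _ : ℕ => ℝ) p →L[ℝ] lp (fun _ : ℕ => ℝ) p) : Prop :=
  ∀ x : lp (fun _ : ℕ => ℝ) p, (∀ n, 0 ≤ x n) → ∀ n, 0 ≤ (T x) n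

/-- `T` has a non-trivial closed invariant ideal. -/
def HasNontrivialClosedInvariantIdeal (p : ℝ≥0∞) [Fact (1 ≤ p)]
    (T : lp (fun _ : ℕ => ℝ) p →L[ℝ] lp (fun _ : ℕ => ℝ) p) : Prop :=
  ∃ I : Submodule ℝ (lp (fun _ : ℕ => ℝ) p),
    IsClosed (I : Set (lp (fun _ : ℕ => ℝ) p)) ∧ I ≠ ⊥ ∧ I ≠ ⊤ ∧
    (∀ x y : lp (fun _ : ℕ => ℝ) p, (∀ n, |x n| ≤ |y n|) → y ∈ I → x ∈ I) ∧
    (∀ x ∈ I, T x ∈ I)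

/-- The matrix of `T` is tridiagonal. -/
def IsTridiagonal (p : ℝ≥0∞) [Fact (1 ≤ p)]
    (T : lp (fun _ : ℕ => ℝ) p →L[ℝ] lp (fun _ : ℕ => ℝ) p) : Prop :=
  ∀ n m : ℕ, (m + 1 < n ∨ n + 1 < m) → (T (e p m)) n = 0

theorem exists_inv_set (φ : ℕ → ℕ) :
    ∃ B : Set ℕ, B.Nonempty ∧ B ≠ Set.univ ∧ ∀ n ∈ B, φ n ∈ B := by
  refine ⟨Set.range (fun k => φ^[k+1] 0), ⟨_, 0, rfl⟩, ?_, ?_⟩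
  · intro h
    have h0 : (0:ℕ) ∈ Set.range (fun k => φ^[k+1] 0) := by rw [h]; trivial
    obtain ⟨k, hk⟩ := h0
    have hper : Function.IsPeriodicPt φ (k+1) 0 := hk
    have hfin : (Set.range (fun k => φ^[k+1] 0)).Finite := by
      refine ((Set.finite_lt_nat (k+1)).image (fun j => φ^[j] 0)).subset ?_
      rintro _ ⟨j, rfl⟩
      exact ⟨(j+1) % (k+1), Nat.mod_lt _ (Nat.succ_pos _), hper.iterate_mod_apply (j+1)⟩
    rw [h] at hfin
    exact Set.infinite_univ hfin
  · rintro _ ⟨k, rfl⟩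
    exact ⟨k+1, Function.iterate_succ_apply' φ (k+1) 0⟩

theorem coord_continuous (p : ℝ≥0∞) [Fact (1 ≤ p)] (n : ℕ) :
    Continuous (fun x : lp (fun _ : ℕ => ℝ) p => x n) :=
  (continuous_apply n).comp (lp.uniformContinuous_coe).continuous

theorem e_apply (p : ℝ≥0∞) (m n : ℕ) : (e p m) n = if n = m then 1 else 0 := by
  unfold e
  split_ifs with h
  · subst h; simp
  · simp [lp.single_apply, h]

theorem nonneg_entry (p : ℝ≥0∞) [Fact (1 ≤ p)]
    (T : lp (fun _ : ℕ => ℝ) p →L[ℝ] lp (fun _ : ℕ => ℝ) p)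
    (hT : IsLatticeHom p T) (m n : ℕ) : 0 ≤ (T (e p m)) n := by
  have h := hT (e p m) 0 (e p m) (by
    intro k; rw [e_apply]; split_ifs <;> simp) n
  rw [h]; simp

theorem entry_unique (p : ℝ≥0∞) [Fact (1 ≤ p)]
    (T : lp (fun _ : ℕ => ℝ) p →L[ℝ] lp (fun _ : ℕ => ℝ) p)
    (hT : IsLatticeHom p T) (m k n : ℕ) (hm : (T (e p m)) n ≠ 0)
    (hk : (T (e p k)) n ≠ 0) : m = k := by
  by_contra hne
  have h := hT (e p m) (e p k) (e p m + e p k) (by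
    intro j
    rw [lp.coeFn_add, Pi.add_apply, e_apply, e_apply]
    split_ifs with h1 h2
    · omega
    · simp
    · simp
    · simp) n
  rw [map_add, lp.coeFn_add, Pi.add_apply] at h
  have h1 := lt_of_le_of_ne (nonneg_entry p T hT m n) hm.symm
  have h2 := lt_of_le_of_ne (nonneg_entry p T hT k n) hk.symm
  rcases max_choice ((T (e p m)) n) ((T (e p k)) n) with h3 | h3 <;> linarith

theorem main_ideal (p : ℝ≥0∞) [Fact (1 ≤ p)] (hp : p ≠ ∞)
    (T : lp (fun _ : ℕ => ℝ) p →L[ℝ] lp (fun _ : ℕ => ℝ) p)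
    (hT : IsLatticeHom p T) : HasNontrivialClosedInvariantIdeal p T := by
  have hφ : ∀ n, ∃ j, ∀ m, (T (e p m)) n ≠ 0 → m = j := by
    intro n
    by_cases h : ∃ m, (T (e p m)) n ≠ 0
    · obtain ⟨j, hj⟩ := h
      exact ⟨j, fun m hm => entry_unique p T hT m j n hm hj⟩
    · push Not at h
      exact ⟨0, fun m hm => absurd (h m) hm⟩
  choose φ hφ using hφ
  obtain ⟨B, ⟨b, hb⟩, hB, hinv⟩ := exists_inv_set φ
  obtain ⟨a, ha⟩ := (Set.ne_univ_iff_exists_notMem B).1 hB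
  refine ⟨{ carrier := {x | ∀ n ∈ B, x n = 0}
            add_mem' := ?_
            zero_mem' := ?_
            smul_mem' := ?_ }, ?_, ?_, ?_, ?_, ?_⟩
  · intro x y hx hy n hn
    rw [lp.coeFn_add, Pi.add_apply, hx n hn, hy n hn, add_zero]
  · intro n _
    simp
  · intro c x hx n hn
    rw [lp.coeFn_smul, Pi.smul_apply, hx n hn, smul_zero]
  · change IsClosed {x : lp (fun _ : ℕ => ℝ) p | ∀ n ∈ B, x n = 0}
    simp only [Set.setOf_forall]
    exact isClosed_iInter fun n => isClosed_iInter fun _ =>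
      isClosed_eq (coord_continuous p n) continuous_const
  · rw [Submodule.ne_bot_iff]
    refine ⟨e p a, ?_, ?_⟩
    · intro n hn
      rw [e_apply, if_neg]
      rintro rfl
      exact ha hn
    · intro h
      have := e_apply p a a
      rw [h] at this
      simp at this
  · intro h
    have h1 : e p b ∈ (⊤ : Submodule ℝ (lp (fun _ : ℕ => ℝ) p)) := trivial
    rw [← h] at h1
    have h2 := h1 b hb
    rw [e_apply] at h2
    simp at h2
  · intro x y hxy hy n hn
    have h1 := hxy n
    rw [hy n hn, abs_zero] at h1
    exact abs_nonpos_iff.1 h1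
  · intro x hx n hn
    have h1 := lp.hasSum_single hp x
    have h2 := (h1.mapL T)
    have h3 := h2.map (AddMonoidHom.mk' (fun x : lp (fun _ : ℕ => ℝ) p => x n)
      (fun x y => by rw [lp.coeFn_add, Pi.add_apply])) (coord_continuous p n)
    refine h3.unique ?_
    convert hasSum_zero with m
    have h4 : lp.single p m (x m) = x m • e p m := by
      rw [e, ← lp.single_smul]; simp
    change (T (lp.single p m (x m))) n = 0
    rw [h4, map_smul, lp.coeFn_smul, Pi.smul_apply, smul_eq_mul]
    by_cases h5 : (T (e p m)) n = 0
    · rw [h5, mul_zero]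
    · have h6 := hφ n m h5
      have h7 : x m = 0 := hx m (h6 ▸ hinv n hn)
      rw [h7, zero_mul]

/-- Every lattice homomorphism on `ℓᵖ` (`1 ≤ p < ∞`) has a non-trivial closed
invariant subspace; moreover, it has a non-trivial closed invariant ideal. -/
theorem stmt_0 (p : ℝ≥0∞) [Fact (1 ≤ p)] (hp : p ≠ ∞)
    (T : lp (fun _ : ℕ => ℝ) p →L[ℝ] lp (fun _ : ℕ => ℝ) p)
    (hT : IsLatticeHom p T) :
    (∃ V : Submodule ℝ (lp (fun _ : ℕ => ℝ) p),
      IsClosed (V : Set (lp (fun _ : ℕ => ℝ) p)) ∧ V ≠ ⊥ ∧ V ≠ ⊤ ∧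
      (∀ x ∈ V, T x ∈ V)) ∧
    HasNontrivialClosedInvariantIdeal p T := by
  have h := main_ideal p hp T hT
  refine ⟨?_, h⟩
  obtain ⟨I, h1, h2, h3, _, h5⟩ := h
  exact ⟨I, h1, h2, h3, h5⟩
end
end

section
/- If T is a lattice isomorphism on ℓ^p (1 ≤ p < ∞), i.e., a bijective lattice homomorphism, then there exist a bijection ξ : ℕ → ℕ and a sequence of positive real numbers (w_n) such that T e_n = w_n e_{ξ(n)} for every n ∈ ℕ. -/
open scoped ENNReal

noncomputable section

theorem aux_pos_mem (p : ℝ≥0∞) [Fact (1 ≤ p)] (hp : p ≠ ∞) (x : lp (fun _ : ℕ => ℝ) p) :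
    ∃ z : lp (fun _ : ℕ => ℝ) p, ∀ n, z n = max (x n) 0 := by
  have hp0 : 0 < p.toReal :=
    ENNReal.toReal_pos (zero_lt_one.trans_le (Fact.out : 1 ≤ p)).ne' hp
  have hm : Memℓp (fun n => max (x n) 0 : ∀ _ : ℕ, ℝ) p := by
    apply memℓp_gen
    refine Summable.of_nonneg_of_le (fun n => by positivity) (fun n => ?_)
      ((lp.memℓp x).summable hp0)
    apply Real.rpow_le_rpow (norm_nonneg _) _ hp0.le
    simp only [Real.norm_eq_abs]
    rw [abs_of_nonneg (le_max_right _ _)]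
    exact max_le (le_abs_self _) (abs_nonneg _)
  exact ⟨⟨_, hm⟩, fun n => rfl⟩

theorem aux_pos (p : ℝ≥0∞) [Fact (1 ≤ p)]
    (T : lp (fun _ : ℕ => ℝ) p →L[ℝ] lp (fun _ : ℕ => ℝ) p)
    (hT : IsLatticeHom p T) (x : lp (fun _ : ℕ => ℝ) p) (hx : ∀ n, 0 ≤ x n) (n : ℕ) :
    0 ≤ (T x) n := by
  have h := hT x 0 x (fun n => by simp [hx n]) n
  rw [map_zero] at h
  rw [h]
  exact le_max_right _ _

theorem aux_pos_inv (p : ℝ≥0∞) [Fact (1 ≤ p)] (hp : p ≠ ∞)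
    (T : lp (fun _ : ℕ => ℝ) p →L[ℝ] lp (fun _ : ℕ => ℝ) p)
    (hT : IsLatticeHom p T) (hinj : Function.Injective T)
    (x : lp (fun _ : ℕ => ℝ) p) (hx : ∀ n, 0 ≤ (T x) n) (n : ℕ) :
    0 ≤ x n := by
  obtain ⟨z, hz⟩ := aux_pos_mem p hp x
  have h := hT x 0 z (fun n => by simp [hz n])
  have hzx : z = x := by
    apply hinj
    ext k
    rw [h k, map_zero]
    exact max_eq_left (hx k)
  rw [← hzx, hz n]
  exact le_max_right _ _

theorem aux_e (p : ℝ≥0∞) (n k : ℕ) : (e p n) k = if k = n then 1 else 0 := by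
  simp [e, Pi.single_apply]

theorem aux_smul (p : ℝ≥0∞) (c : ℝ) (n k : ℕ) :
    (c • e p n) k = if k = n then c else 0 := by
  rw [lp.coeFn_smul, Pi.smul_apply, aux_e]
  simp

theorem aux_sub (p : ℝ≥0∞) (x y : lp (fun _ : ℕ => ℝ) p) (k : ℕ) :
    (x - y) k = x k - y k := by
  rw [lp.coeFn_sub, Pi.sub_apply]

theorem aux_exists (p : ℝ≥0∞) (x : lp (fun _ : ℕ => ℝ) p) (hx : ∀ n, 0 ≤ x n)
    (h0 : x ≠ 0) : ∃ n, 0 < x n := by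
  by_contra! h
  apply h0
  ext n
  exact le_antisymm (h n) (hx n)

theorem aux_atom (p : ℝ≥0∞) [Fact (1 ≤ p)] (hp : p ≠ ∞)
    (T : lp (fun _ : ℕ => ℝ) p →L[ℝ] lp (fun _ : ℕ => ℝ) p)
    (hT : IsLatticeHom p T) (hbij : Function.Bijective T) (n : ℕ) :
    ∃ k : ℕ, ∃ w : ℝ, 0 < w ∧ T (e p n) = w • e p k := by
  have hu : ∀ k, 0 ≤ (T (e p n)) k := aux_pos p T hT _ (fun k => by
    rw [aux_e]; split_ifs <;> norm_num)
  have hne : T (e p n) ≠ 0 := by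
    intro h
    have h1 : e p n = 0 := hbij.1 (by rw [h, map_zero])
    have h2 := aux_e p n n
    rw [h1] at h2
    simp at h2
  obtain ⟨k, hk⟩ := aux_exists p _ hu hne
  refine ⟨k, _, hk, ?_⟩
  obtain ⟨y, hy⟩ := hbij.2 ((T (e p n)) k • e p k)
  have hy0 : ∀ m, 0 ≤ y m := aux_pos_inv p hp T hT hbij.1 y (fun m => by
    rw [hy, aux_smul]; split_ifs
    · exact hk.le
    · exact le_rfl)
  have hy1 : ∀ m, 0 ≤ (e p n - y) m := aux_pos_inv p hp T hT hbij.1 _ (fun m => by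
    rw [map_sub, aux_sub, hy, aux_smul]; split_ifs with h
    · rw [h]; simp
    · simpa using hu m)
  have hyc : y = y n • e p n := by
    ext m
    rw [aux_smul]
    split_ifs with h
    · rw [h]
    · have := hy1 m
      rw [aux_sub, aux_e, if_neg h] at this
      linarith [hy0 m]
  have h1 : T y = y n • T (e p n) := by
    conv_lhs => rw [hyc]
    rw [map_smul]
  have h2 : (T y) k = y n * (T (e p n)) k := by
    rw [h1, lp.coeFn_smul, Pi.smul_apply, smul_eq_mul]
  rw [hy, aux_smul, if_pos rfl] at h2
  have h3 : y n = 1 := by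
    have : (y n - 1) * (T (e p n)) k = 0 := by linarith
    rcases mul_eq_zero.1 this with h | h
    · linarith
    · exact absurd h hk.ne'
  rw [h3, one_smul] at h1
  rw [← hy, h1]

/-- A lattice isomorphism on `ℓᵖ` (`1 ≤ p < ∞`) is a weighted permutation
operator. -/
theorem stmt_2 (p : ℝ≥0∞) [Fact (1 ≤ p)] (hp : p ≠ ∞)
    (T : lp (fun _ : ℕ => ℝ) p →L[ℝ] lp (fun _ : ℕ => ℝ) p)
    (hT : IsLatticeHom p T) (hbij : Function.Bijective T) :
    ∃ ξ : ℕ → ℕ, Function.Bijective ξ ∧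
      ∃ w : ℕ → ℝ, (∀ n, 0 < w n) ∧ ∀ n, T (e p n) = w n • e p (ξ n) := by
  choose ξ w hw hξ using aux_atom p hp T hT hbij
  refine ⟨ξ, ⟨?_, ?_⟩, w, hw, hξ⟩
  · intro n m hnm
    have h : w m • e p n = w n • e p m := by
      apply hbij.1
      rw [map_smul, map_smul, hξ n, hξ m, hnm, smul_comm]
    have h1 := aux_smul p (w m) n n
    rw [h, aux_smul, if_pos rfl] at h1
    by_contra hne
    rw [if_neg hne] at h1
    exact (hw m).ne h1
  · intro k
    obtain ⟨x, hx⟩ := hbij.2 (e p k)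
    have hx0 : ∀ m, 0 ≤ x m := aux_pos_inv p hp T hT hbij.1 x (fun m => by
      rw [hx, aux_e]; split_ifs <;> norm_num)
    have hne : x ≠ 0 := by
      intro h
      have h2 := aux_e p k k
      rw [← hx, h, map_zero] at h2
      simp at h2
    obtain ⟨n, hn⟩ := aux_exists p x hx0 hne
    refine ⟨n, ?_⟩
    have h := aux_pos p T hT (x - x n • e p n) (fun m => by
      rw [aux_sub, aux_smul]; split_ifs with h
      · rw [h]; simp
      · simpa using hx0 m) (ξ n)
    rw [map_sub, map_smul, hξ, aux_sub, hx, smul_smul, aux_smul, if_pos rfl, aux_e] at h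
    by_contra hne
    rw [if_neg hne] at h
    linarith [mul_pos hn (hw n)]
end
end

section
/- If T is an injective lattice homomorphism on ℓ^p (1 ≤ p < ∞) whose range is dense in ℓ^p, then T is a weighted permutation operator: there exist a bijection ξ : ℕ → ℕ and positive real numbers w_n > 0 such that T e_n = w_n e_{ξ(n)} for every n ∈ ℕ. -/
open scoped ENNReal

noncomputable section

/-- An injective, dense range lattice homomorphism on `ℓᵖ` (`1 ≤ p < ∞`) is a
weighted permutation operator. -/
theorem stmt_3 (p : ℝ≥0∞) [Fact (1 ≤ p)] (hp : p ≠ ∞)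
    (T : lp (fun _ : ℕ => ℝ) p →L[ℝ] lp (fun _ : ℕ => ℝ) p)
    (hT : IsLatticeHom p T) (hinj : Function.Injective T)
    (hdense : DenseRange T) :
    ∃ ξ : ℕ → ℕ, Function.Bijective ξ ∧
      ∃ w : ℕ → ℝ, (∀ n, 0 < w n) ∧ ∀ n, T (e p n) = w n • e p (ξ n) := by
  classical
  have hp0 : p ≠ 0 := (lt_of_lt_of_le zero_lt_one (Fact.out : 1 ≤ p)).ne'
  have he1 : ∀ n, e p n n = 1 := fun n => lp.single_apply_self p n 1
  have he0 : ∀ n k, k ≠ n → e p n k = 0 := fun n k h => lp.single_apply_ne p n 1 h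
  have hnn : ∀ n m, 0 ≤ T (e p m) n := by
    intro n m
    have h := hT (e p m) 0 (e p m) (by
      intro k
      by_cases hk : k = m
      · subst hk; simp [he1]
      · simp [he0 m k hk]) n
    rw [h]
    simp
  have hdisj : ∀ n m m', m ≠ m' → T (e p m) n = 0 ∨ T (e p m') n = 0 := by
    intro n m m' hm
    have h := hT (e p m) (e p m') (e p m + e p m') (by
      intro k
      rw [lp.coeFn_add, Pi.add_apply]
      by_cases hk : k = m
      · subst hk; simp [he1, he0 m' k hm]
      · by_cases hk' : k = m'
        · subst hk'; simp [he1, he0 m k hk]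
        · simp [he0 m k hk, he0 m' k hk']) n
    rw [map_add, lp.coeFn_add, Pi.add_apply] at h
    rcases max_choice (T (e p m) n) (T (e p m') n) with h' | h'
    · right; linarith
    · left; linarith
  have hsum : ∀ x n, HasSum (fun m => x m * T (e p m) n) (T x n) := by
    intro x n
    have h := (lp.hasSum_single hp x).mapL ((lp.evalCLM ℝ (fun _ : ℕ => ℝ) (p := p) n).comp T)
    suffices hfun : (fun m => x m * T (e p m) n) = fun m =>
      ((lp.evalCLM ℝ (fun _ : ℕ => ℝ) (p := p) n).comp T) (lp.single p m (x m)) by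
      rw [hfun]; exact h
    funext m
    have : lp.single p m (x m) = x m • e p m := by
      unfold e
      rw [← lp.single_smul]; simp
    rw [this, map_smul]
    rfl
  have hdens : ∀ (n k : ℕ) (a b : ℝ), (∀ x, a * T x n = b * T x k) →
      ∀ y : lp (fun _ : ℕ => ℝ) p, a * y n = b * y k := by
    intro n k a b h y
    have := hdense.equalizer
      (g := fun y => (a • lp.evalCLM ℝ (fun _ : ℕ => ℝ) (p := p) n) y)
      (h := fun y => (b • lp.evalCLM ℝ (fun _ : ℕ => ℝ) (p := p) k) y)
      (ContinuousLinearMap.continuous _) (ContinuousLinearMap.continuous _)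
      (by funext x; exact h x)
    exact congrFun this y
  have hex : ∀ n, ∃ m, T (e p m) n ≠ 0 := by
    intro n
    by_contra! hc
    have := hdens n n 1 0 (by
      intro x
      have h := hsum x n
      simp only [hc, mul_zero] at h
      rw [h.unique hasSum_zero]; simp) (e p n)
    simp [he1] at this
  choose η hη using hex
  have hz : ∀ n m, m ≠ η n → T (e p m) n = 0 := fun n m h =>
    (hdisj n m (η n) h).resolve_right (hη n)
  have hform : ∀ x n, T x n = x (η n) * T (e p (η n)) n := by
    intro x n
    exact (hsum x n).unique (hasSum_single (η n) (fun m hm => by simp [hz n m hm]))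
  have hηi : Function.Injective η := by
    intro n k hnk
    by_contra hne
    have := hdens n k (T (e p (η k)) k) (T (e p (η n)) n) (by
      intro x
      rw [hform x n, hform x k, hnk]; ring) (e p n)
    rw [he1, he0 n k (Ne.symm hne)] at this
    simp at this
    exact hη k this
  have hηs : Function.Surjective η := by
    intro m
    by_contra! hc
    have h0 : T (e p m) = T 0 := by
      rw [map_zero]
      ext n
      rw [hz n m (hc n).symm]; rfl
    have := congrArg (fun x : lp (fun _ : ℕ => ℝ) p => x m) (hinj h0)
    simp [he1] at this
  let E := Equiv.ofBijective η ⟨hηi, hηs⟩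
  have hE : ∀ m, η (E.symm m) = m := fun m => E.apply_symm_apply m
  refine ⟨E.symm, E.symm.bijective, fun m => T (e p m) (E.symm m), fun m => ?_, fun m => ?_⟩
  · refine lt_of_le_of_ne (hnn _ _) (Ne.symm ?_)
    have := hη (E.symm m)
    rwa [hE] at this
  · ext n
    rw [lp.coeFn_smul, Pi.smul_apply, smul_eq_mul]
    by_cases hn : n = E.symm m
    · rw [hn, he1, mul_one]
    · rw [he0 _ _ hn, mul_zero]
      refine hz n m fun h => hn ?_
      rw [h]; exact (E.symm_apply_apply n).symm
end
end

section
/- Let T be a positive bounded linear operator on ℓ^p (1 ≤ p < ∞) with matrix a_{n,m} = (T e_m) n. Then T is a lattice homomorphism if and only if each row of the matrix has at most one non-zero entry, i.e., for every n and every pair i ≠ j, a_{n,i} = 0 or a_{n,j} = 0. -/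
open scoped ENNReal

noncomputable section

/-- A positive operator on `ℓᵖ` (`1 ≤ p < ∞`) is a lattice homomorphism if and
only if each row of its matrix `a n m = (T eₘ) n` has at most one non-zero
entry. -/
theorem stmt_4 (p : ℝ≥0∞) [Fact (1 ≤ p)] (hp : p ≠ ∞)
    (T : lp (fun _ : ℕ => ℝ) p →L[ℝ] lp (fun _ : ℕ => ℝ) p)
    (hTpos : IsPositiveOp p T) :
    IsLatticeHom p T ↔
      ∀ n i j : ℕ, i ≠ j → (T (e p i)) n = 0 ∨ (T (e p j)) n = 0 := by
  have key : ∀ n (x : lp (fun _ : ℕ => ℝ) p),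
      HasSum (fun m => x m * (T (e p m)) n) ((T x) n) := by
    intro n x
    have h := lp.hasSum_single hp x
    have h2 := h.mapL ((lp.evalCLM ℝ (fun _ : ℕ => ℝ) p n).comp T)
    have h3 : (fun m => x m * (T (e p m)) n) =
        fun m => ((lp.evalCLM ℝ (fun _ : ℕ => ℝ) p n).comp T) (lp.single p m (x m)) := by
      funext m
      have : lp.single p m (x m) = (x m) • e p m := by
        rw [e, ← lp.single_smul]; simp
      rw [this, map_smul]
      rfl
    rw [h3]
    exact h2
  have epos : ∀ i n, 0 ≤ (T (e p i)) n := by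
    intro i n
    refine hTpos _ (fun k => ?_) n
    rw [e, lp.single_apply, Pi.single_apply]
    split_ifs <;> norm_num
  constructor
  · intro h n i j hij
    have h1 := h (e p i) (e p j) (e p i + e p j) (by
      intro k
      rw [lp.coeFn_add, Pi.add_apply, e, e, lp.single_apply, lp.single_apply,
        Pi.single_apply, Pi.single_apply]
      split_ifs with h1 h2
      · exact absurd (h1.symm.trans h2) hij
      all_goals norm_num) n
    rw [map_add, lp.coeFn_add, Pi.add_apply] at h1
    have := epos i n
    have := epos j n
    rcases max_choice ((T (e p i)) n) ((T (e p j)) n) with h2 | h2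
    · right; linarith
    · left; linarith
  · intro h x y z hz n
    by_cases h0 : ∃ i, (T (e p i)) n ≠ 0
    · obtain ⟨i, hi⟩ := h0
      have k2 : ∀ w : lp (fun _ : ℕ => ℝ) p, (T w) n = w i * (T (e p i)) n := by
        intro w
        refine (key n w).unique (hasSum_single i fun m hm => ?_)
        rw [(h n m i hm).resolve_right hi, mul_zero]
      rw [k2 z, k2 x, k2 y, hz, max_mul_of_nonneg _ _ (epos i n)]
    · push Not at h0
      have k2 : ∀ w : lp (fun _ : ℕ => ℝ) p, (T w) n = 0 := by
        intro w
        refine (key n w).unique ?_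
        simp only [h0, mul_zero]
        exact hasSum_zero
      rw [k2, k2, k2, max_self]
end
end

section
/- Let W be the weighted shift on the complex Hilbert space ℓ² determined by W e_n = w_n e_{n+1} with weights w_n = exp((n+1)^{1/2} − n^{1/2}). Then every non-zero bounded linear operator S on ℓ² commuting with W (S ∘ W = W ∘ S) is not quasinilpotent at any non-zero vector: for every f ∈ ℓ² with f ≠ 0, limsup_{n→∞} ‖S^n f‖^{1/n} > 0. -/
open scoped ENNReal

noncomputable section

namespace QN

abbrev E := lp (fun _ : ℕ => ℂ) 2

def b (n : ℕ) : ℂ := (Real.exp (-Real.sqrt (n : ℝ)) : ℂ)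

lemma b_ne (n : ℕ) : b n ≠ 0 := by
  unfold b; exact_mod_cast (Real.exp_pos _).ne'

lemma b_le (n : ℕ) : ‖b n‖ ≤ 1 := by
  unfold b
  rw [Complex.norm_real, Real.norm_eq_abs, Real.abs_exp]
  exact Real.exp_le_one_iff.2 (by simp)

lemma ker_mem (z : ℂ) (hz : ‖z‖ < 1) :
    Memℓp (fun n : ℕ => (starRingEnd ℂ) (z ^ n * b n)) 2 := by
  apply memℓp_gen
  have h : Summable (fun n : ℕ => ‖z‖ ^ n) := summable_geometric_of_lt_one (norm_nonneg _) hz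
  refine Summable.of_nonneg_of_le (fun n => by positivity) (fun n => ?_) h
  have h1 : ‖z‖ ^ n ≤ 1 := pow_le_one₀ (norm_nonneg _) hz.le
  have h0 : 0 ≤ ‖z‖ ^ n := by positivity
  have h2 : ‖z‖ ^ n * ‖b n‖ ≤ ‖z‖ ^ n := mul_le_of_le_one_right h0 (b_le n)
  have h3 : 0 ≤ ‖z‖ ^ n * ‖b n‖ := by positivity
  simp only [RCLike.norm_conj, norm_mul, norm_pow, ENNReal.toReal_ofNat, Real.rpow_ofNat]
  nlinarith

def psi (z : ℂ) (hz : ‖z‖ < 1) : E →L[ℂ] ℂ :=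
  innerSL ℂ (⟨_, ker_mem z hz⟩ : E)

lemma psi_hasSum (z : ℂ) (hz : ‖z‖ < 1) (f : E) :
    HasSum (fun n => z ^ n * b n * f n) (psi z hz f) := by
  have := lp.hasSum_inner (𝕜 := ℂ) (⟨_, ker_mem z hz⟩ : E) f
  have e : (fun n => z ^ n * b n * f n) =
      fun n => inner ℂ ((⟨_, ker_mem z hz⟩ : E) n) (f n) := by
    funext n
    simp [RCLike.inner_apply, mul_comm]
  rw [e]
  exact this

lemma psi_single (z : ℂ) (hz : ‖z‖ < 1) (n : ℕ) :
    psi z hz (lp.single 2 n 1) = z ^ n * b n := by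
  refine (psi_hasSum z hz _).unique ?_
  convert hasSum_ite_eq n (z ^ n * b n) using 2 with m
  by_cases h : m = n
  · subst h; simp
  · simp [h]

lemma ext_single {φ χ : E →L[ℂ] ℂ} (h : ∀ n, φ (lp.single 2 n 1) = χ (lp.single 2 n 1)) :
    φ = χ := by
  ext f
  have key : ∀ θ : E →L[ℂ] ℂ, HasSum (fun n => f n * θ (lp.single 2 n 1)) (θ f) := by
    intro θ
    have h1 := (lp.hasSum_single (p := 2) (by simp) f).mapL θ
    convert h1 using 2 with n
    rw [← smul_eq_mul, ← map_smul, ← lp.single_smul]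
    simp
  refine (key φ).unique ?_
  simpa only [h] using key χ

/-- nonvanishing near zero -/
lemma psi_ne (f : E) (hf : f ≠ 0) :
    ∀ᶠ z in nhdsWithin (0 : ℂ) {0}ᶜ, ∀ hz : ‖z‖ < 1, psi z hz f ≠ 0 := by
  set p := FormalMultilinearSeries.ofScalars ℂ (fun n => b n * f n) with hp
  have hp0 : p ≠ 0 := by
    intro h
    rw [hp, FormalMultilinearSeries.ofScalars_series_eq_zero] at h
    apply hf
    ext n
    have := congrFun h n
    simpa [b_ne] using this
  have hr : ((1 : NNReal) : ℝ≥0∞) ≤ p.radius := by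
    refine p.le_radius_of_bound ‖f‖ fun n => ?_
    rw [hp, FormalMultilinearSeries.ofScalars_norm]
    simp only [NNReal.coe_one, one_pow, mul_one, norm_mul]
    have := lp.norm_apply_le_norm (p := 2) (by simp) f n
    nlinarith [b_le n, norm_nonneg (b n), norm_nonneg (f n)]
  have hpos : 0 < p.radius := lt_of_lt_of_le (by simp) hr
  have hs := (p.hasFPowerSeriesOnBall hpos).hasFPowerSeriesAt
  filter_upwards [hs.locally_ne_zero hp0] with z hz hz1
  convert hz using 1
  refine (psi_hasSum z hz1 f).unique ?_
  have hmem : z ∈ Metric.eball (0 : ℂ) p.radius := by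
    refine Metric.eball_subset_eball hr ?_
    rw [Metric.eball_coe]
    simpa using hz1
  have e : (fun n => z ^ n * b n * f n) = fun n => p n (fun _ => z) := by
    funext n
    rw [hp, FormalMultilinearSeries.ofScalars_apply_eq]
    simp only [smul_eq_mul]; ring
  rw [e]
  exact p.hasSum hmem

end QN

open QN

/-- Any non-zero operator commuting with the weighted shift
`W eₙ = exp((n+1)^{1/2} - n^{1/2}) e_{n+1}` on complex `ℓ²` is not
quasinilpotent at any non-zero vector. -/
theorem stmt_7
    (W : lp (fun _ : ℕ => ℂ) 2 →L[ℂ] lp (fun _ : ℕ => ℂ) 2)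
    (hW : ∀ n : ℕ, W (lp.single 2 n 1) =
      (Real.exp (Real.sqrt ((n : ℝ) + 1) - Real.sqrt (n : ℝ)) : ℂ) •
        lp.single 2 (n + 1) 1)
    (S : lp (fun _ : ℕ => ℂ) 2 →L[ℂ] lp (fun _ : ℕ => ℂ) 2)
    (hS : S ≠ 0) (hSW : S * W = W * S)
    (f : lp (fun _ : ℕ => ℂ) 2) (hf : f ≠ 0) :
    0 < Filter.atTop.limsup (fun n : ℕ => ‖(S ^ n) f‖ ^ ((n : ℝ)⁻¹)) := by
  obtain ⟨g, hg⟩ : ∃ g, S g ≠ 0 := by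
    by_contra! h
    exact hS (ContinuousLinearMap.ext h)
  have hsmall : ∀ᶠ z in nhdsWithin (0 : ℂ) {0}ᶜ, ‖z‖ < 1 :=
    nhdsWithin_le_nhds (by
      filter_upwards [Metric.ball_mem_nhds (0 : ℂ) one_pos] with z hz
      simpa using hz)
  obtain ⟨z, h1, h2, hz⟩ := ((psi_ne f hf).and ((psi_ne (S g) hg).and hsmall)).exists
  specialize h1 hz
  specialize h2 hz
  set ψ := psi z hz with hψ
  have hψW : ∀ x, ψ (W x) = z * ψ x := by
    have : ψ.comp W = z • ψ := by
      apply ext_single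
      intro n
      simp only [ContinuousLinearMap.comp_apply, hW, map_smul, ContinuousLinearMap.smul_apply,
        smul_eq_mul, hψ, psi_single, b, Real.exp_sub, Real.exp_neg]
      have e1 := (Real.exp_pos (Real.sqrt ((n : ℝ) + 1))).ne'
      have e2 := (Real.exp_pos (Real.sqrt (n : ℝ))).ne'
      push_cast
      field_simp
      try ring
    intro x
    simpa using congrArg (fun T => T x) this
  set c := ψ (S (lp.single 2 0 1)) with hc
  have hψS : ∀ x, ψ (S x) = c * ψ x := by
    have : ψ.comp S = c • ψ := by
      apply ext_single
      intro n
      simp only [ContinuousLinearMap.comp_apply, ContinuousLinearMap.smul_apply, smul_eq_mul]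
      induction n with
      | zero => rw [← hc, hψ, psi_single]; simp [b]
      | succ n ih =>
        have hw : (Real.exp (Real.sqrt ((n : ℝ) + 1) - Real.sqrt (n : ℝ)) : ℂ) ≠ 0 := by
          exact_mod_cast (Real.exp_pos _).ne'
        have h3 : S (W (lp.single 2 n 1)) = W (S (lp.single 2 n 1)) :=
          congrArg (fun T => T (lp.single 2 n 1)) hSW
        have h4 : ψ (S (W (lp.single 2 n 1))) = c * ψ (W (lp.single 2 n 1)) := by
          rw [h3, hψW, hψW, ih]; ring
        rw [hW, map_smul, map_smul, map_smul, smul_eq_mul, smul_eq_mul] at h4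
        apply mul_left_cancel₀ hw
        rw [h4]; ring
    intro x
    simpa using congrArg (fun T => T x) this
  have hc0 : c ≠ 0 := by
    intro h
    exact h2 (by rw [hψS, h, zero_mul])
  have hpow : ∀ n, ψ ((S ^ n) f) = c ^ n * ψ f := by
    intro n
    induction n with
    | zero => simp
    | succ n ih =>
      rw [pow_succ', ContinuousLinearMap.mul_apply, hψS, ih]; ring
  have hψ0 : 0 < ‖ψ‖ := by
    rw [norm_pos_iff]
    intro h
    exact h1 (by rw [h]; simp)
  set d := ‖ψ f‖ / ‖ψ‖ with hd
  have hd0 : 0 < d := div_pos (norm_pos_iff.2 h1) hψ0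
  have hcn : 0 < ‖c‖ := norm_pos_iff.2 hc0
  have hlow : ∀ n, ‖c‖ ^ n * d ≤ ‖(S ^ n) f‖ := by
    intro n
    have := ψ.le_opNorm ((S ^ n) f)
    rw [hpow, norm_mul, norm_pow] at this
    rw [hd, ← mul_div_assoc, div_le_iff₀ hψ0]
    linarith
  have hup : ∀ n, ‖(S ^ n) f‖ ≤ ‖S‖ ^ n * ‖f‖ := by
    intro n
    induction n with
    | zero => simp
    | succ n ih =>
      rw [pow_succ', ContinuousLinearMap.mul_apply]
      calc _ ≤ ‖S‖ * ‖(S ^ n) f‖ := S.le_opNorm _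
        _ ≤ ‖S‖ * (‖S‖ ^ n * ‖f‖) := by gcongr
        _ = _ := by ring
  set m := min d 1
  have hm0 : 0 < m := lt_min hd0 one_pos
  have hL : ∀ n : ℕ, n ≠ 0 → ‖c‖ * m ≤ ‖(S ^ n) f‖ ^ ((n : ℝ)⁻¹) := by
    intro n hn
    rw [← Real.pow_rpow_inv_natCast (x := ‖c‖ * m) (by positivity) hn]
    apply Real.rpow_le_rpow (by positivity) _ (by positivity)
    refine le_trans ?_ (hlow n)
    rw [mul_pow]
    gcongr
    exact (pow_le_of_le_one hm0.le (min_le_right _ _) hn).trans (min_le_left _ _)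
  have hU : ∀ n : ℕ, n ≠ 0 → ‖(S ^ n) f‖ ^ ((n : ℝ)⁻¹) ≤ ‖S‖ * max ‖f‖ 1 := by
    intro n hn
    rw [← Real.pow_rpow_inv_natCast (x := ‖S‖ * max ‖f‖ 1) (by positivity) hn]
    apply Real.rpow_le_rpow (by positivity) _ (by positivity)
    refine le_trans (hup n) ?_
    rw [mul_pow]
    gcongr
    exact (le_max_left _ _).trans (le_self_pow₀ (le_max_right _ _) hn)
  refine lt_of_lt_of_le (mul_pos hcn hm0) (Filter.le_limsup_of_frequently_le ?_ ?_)
  · apply Filter.Eventually.frequently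
    filter_upwards [Filter.eventually_ne_atTop 0] with n hn using hL n hn
  · refine ⟨‖S‖ * max ‖f‖ 1, ?_⟩
    rw [Filter.eventually_map]
    filter_upwards [Filter.eventually_ne_atTop 0] with n hn using hU n hn
end
end

section
/- Let T be a positive bounded linear operator on ℓ^p (1 ≤ p < ∞) whose matrix a_{n,m} = (T e_m) n is tridiagonal (a_{n,m} = 0 whenever |n − m| > 1). If both the sub-diagonal (a_{n+1,n}) and the super-diagonal (a_{n,n+1}) have no null elements, i.e., a_{n+1,n} > 0 and a_{n,n+1} > 0 for all n, then T has no non-trivial closed invariant ideal. -/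
open scoped ENNReal

noncomputable section

/-- A positive tridiagonal operator on `ℓᵖ` (`1 ≤ p < ∞`) whose sub-diagonal and
super-diagonal have no null elements has no non-trivial closed invariant
ideal. -/
theorem stmt_8 (p : ℝ≥0∞) [Fact (1 ≤ p)] (hp : p ≠ ∞)
    (T : lp (fun _ : ℕ => ℝ) p →L[ℝ] lp (fun _ : ℕ => ℝ) p)
    (hTpos : IsPositiveOp p T) (htri : IsTridiagonal p T)
    (hsub : ∀ n : ℕ, 0 < (T (e p n)) (n + 1))
    (hsup : ∀ n : ℕ, 0 < (T (e p (n + 1))) n) :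
    ¬ HasNontrivialClosedInvariantIdeal p T := by
  rintro ⟨I, hcl, hbot, htop, hid, hinv⟩
  have key : ∀ x ∈ I, ∀ n, x n ≠ 0 → e p n ∈ I := by
    intro x hx n hn
    refine hid _ ((x n)⁻¹ • x) ?_ (I.smul_mem _ hx)
    intro m
    by_cases h : m = n
    · subst h
      simp [e, hn]
    · have h0 : (e p n) m = 0 := lp.single_apply_ne p n 1 h
      rw [h0, abs_zero]
      exact abs_nonneg _
  have hup : ∀ n, e p n ∈ I → e p (n + 1) ∈ I := fun n h =>
    key _ (hinv _ h) _ (hsub n).ne'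
  have hdown : ∀ n, e p (n + 1) ∈ I → e p n ∈ I := fun n h =>
    key _ (hinv _ h) _ (hsup n).ne'
  obtain ⟨x, hx, hx0⟩ := (Submodule.ne_bot_iff I).1 hbot
  have hex : ∃ n, x n ≠ 0 := by
    by_contra! h
    exact hx0 (lp.ext (funext h))
  obtain ⟨n, hn⟩ := hex
  have h0 : ∀ k, e p k ∈ I → e p 0 ∈ I := by
    intro k
    induction k with
    | zero => exact id
    | succ k ih => exact fun h => ih (hdown k h)
  have hall : ∀ k, e p k ∈ I := by
    intro k
    induction k with
    | zero => exact h0 n (key x hx n hn)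
    | succ k ih => exact hup k ih
  apply htop
  rw [eq_top_iff]
  intro y _
  refine hcl.mem_of_tendsto (lp.hasSum_single hp y) (Filter.Eventually.of_forall fun s => ?_)
  refine I.sum_mem fun i _ => ?_
  have hi : lp.single p i (y i) = y i • e p i := by
    rw [e, ← lp.single_smul]
    simp
  rw [hi]
  exact I.smul_mem _ (hall i)
end
end

section
/- Let T be a positive bounded linear operator on ℓ^p (1 ≤ p < ∞) whose matrix a_{n,m} = (T e_m) n is tridiagonal. If a_{n,n+1} · a_{n+1,n} = 0 for every n ∈ ℕ, then T has a non-trivial closed invariant ideal. -/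
open scoped ENNReal

noncomputable section

theorem stmt9_aux (p : ℝ≥0∞) [Fact (1 ≤ p)] (hp : p ≠ ∞)
    (T : lp (fun _ : ℕ => ℝ) p →L[ℝ] lp (fun _ : ℕ => ℝ) p) (S : Set ℕ)
    (a b : ℕ) (ha : a ∈ S) (hb : b ∉ S)
    (hS : ∀ m ∈ S, ∀ n, n ∉ S → (T (e p m)) n = 0) :
    HasNontrivialClosedInvariantIdeal p T := by
  have p0 : p ≠ 0 := (lt_of_lt_of_le zero_lt_one (Fact.out : 1 ≤ p)).ne'
  have hev : ∀ n : ℕ, Continuous (fun x : lp (fun _ : ℕ => ℝ) p => x n) := fun n =>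
    (continuous_apply n).comp (lp.uniformContinuous_coe (E := fun _ : ℕ => ℝ) (p := p)).continuous
  let I : Submodule ℝ (lp (fun _ : ℕ => ℝ) p) :=
    { carrier := {x | ∀ n, n ∉ S → x n = 0}
      add_mem' := by
        intro x y hx hy n hn
        simp [hx n hn, hy n hn]
      zero_mem' := by
        intro n hn
        simp
      smul_mem' := by
        intro c x hx n hn
        simp [hx n hn] }
  have hI : ∀ x, x ∈ I ↔ ∀ n, n ∉ S → x n = 0 := fun x => Iff.rfl
  refine ⟨I, ?_, ?_, ?_, ?_, ?_⟩
  · have : (I : Set (lp (fun _ : ℕ => ℝ) p)) = ⋂ n, ⋂ (_ : n ∉ S), {x | x n = 0} := by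
      ext x
      simp [hI]
    rw [this]
    exact isClosed_iInter fun n => isClosed_iInter fun _ => isClosed_eq (hev n) continuous_const
  · intro hbot
    have h1 : e p a ∈ I := by
      rw [hI]
      intro n hn
      have : n ≠ a := fun h => hn (h ▸ ha)
      simp [e, lp.single_apply, this]
    rw [hbot, Submodule.mem_bot] at h1
    have h2 : (e p a) a = 0 := by rw [h1]; rfl
    simp [e, lp.single_apply] at h2
  · intro htop
    have h1 : e p b ∈ I := by rw [htop]; trivial
    have h2 := (hI _).1 h1 b hb
    simp [e, lp.single_apply] at h2
  · intro x y hxy hy n hn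
    have := hxy n
    rw [(hI y).1 hy n hn] at this
    simpa using this
  · intro x hx
    rw [hI] at hx ⊢
    intro n hn
    have h1 := (lp.hasSum_single hp x).mapL T
    have h2 := h1.map ((Pi.evalAddMonoidHom (fun _ : ℕ => ℝ) n).comp
      (AddSubgroup.subtype (lp (fun _ : ℕ => ℝ) p))) (hev n)
    refine h2.unique ?_
    convert hasSum_zero with m
    have h3 : lp.single p m (x m) = x m • e p m := by
      rw [e, ← lp.single_smul]; simp
    change (T (lp.single p m (x m))) n = 0
    rw [h3, map_smul]
    by_cases hm : m ∈ S
    · simp [hS m hm n hn]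
    · simp [hx m hm]

/-- A positive tridiagonal operator on `ℓᵖ` (`1 ≤ p < ∞`) satisfying
`a_{n,n+1} ⬝ a_{n+1,n} = 0` for every `n` has a non-trivial closed invariant
ideal. -/
theorem stmt_9 (p : ℝ≥0∞) [Fact (1 ≤ p)] (hp : p ≠ ∞)
    (T : lp (fun _ : ℕ => ℝ) p →L[ℝ] lp (fun _ : ℕ => ℝ) p)
    (hTpos : IsPositiveOp p T) (htri : IsTridiagonal p T)
    (h : ∀ n : ℕ, (T (e p (n + 1))) n * (T (e p n)) (n + 1) = 0) :
    HasNontrivialClosedInvariantIdeal p T := by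
  rcases mul_eq_zero.1 (h 0) with h0 | h0
  · refine stmt9_aux p hp T {0}ᶜ 1 0 (by simp) (by simp) ?_
    intro m hm n hn
    have hn : n = 0 := by simpa using hn
    have hm : m ≠ 0 := by simpa using hm
    subst hn
    by_cases h1 : m = 1
    · subst h1; exact h0
    · exact htri _ _ (by omega)
  · refine stmt9_aux p hp T {0} 0 1 (by simp) (by simp) ?_
    intro m hm n hn
    have hn : n ≠ 0 := by simpa using hn
    have hm : m = 0 := by simpa using hm
    subst hm
    by_cases h1 : n = 1
    · subst h1; exact h0
    · exact htri _ _ (by omega)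
end
end

section
/- Let T be a positive bounded linear operator on ℓ^p (1 ≤ p < ∞) whose matrix a_{n,m} = (T e_m) n is tridiagonal. Then T has no non-trivial closed invariant ideal if and only if both the sub-diagonal and the super-diagonal of the matrix have no null elements, i.e., a_{n+1,n} > 0 and a_{n,n+1} > 0 for every n ∈ ℕ. -/
open scoped ENNReal

noncomputable section

theorem aux_single (p : ℝ≥0∞) (m : ℕ) (c : ℝ) :
    (lp.single p m c : lp (fun _ : ℕ => ℝ) p) = c • e p m := by
  unfold e
  rw [← lp.single_smul]
  simp

theorem aux_hasSum (p : ℝ≥0∞) [Fact (1 ≤ p)] (hp : p ≠ ∞) (x : lp (fun _ : ℕ => ℝ) p) :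
    HasSum (fun m => x m • e p m) x := by
  have h := lp.hasSum_single hp x
  simpa only [aux_single] using h

theorem aux_e_self (p : ℝ≥0∞) (n : ℕ) : (e p n) n = 1 := lp.single_apply_self _ _ _

theorem aux_e_ne (p : ℝ≥0∞) {n m : ℕ} (h : m ≠ n) : (e p n) m = 0 :=
  lp.single_apply_ne _ _ _ h

theorem aux_ideal (p : ℝ≥0∞) [Fact (1 ≤ p)] (hp : p ≠ ∞)
    (T : lp (fun _ : ℕ => ℝ) p →L[ℝ] lp (fun _ : ℕ => ℝ) p) (S : Set ℕ) (a b : ℕ)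
    (ha : a ∈ S) (hb : b ∉ S) (h : ∀ n ∈ S, ∀ m, m ∉ S → (T (e p m)) n = 0) :
    HasNontrivialClosedInvariantIdeal p T := by
  let ev : ℕ → lp (fun _ : ℕ => ℝ) p →L[ℝ] ℝ := fun n => lp.evalCLM ℝ (fun _ : ℕ => ℝ) p n
  have hev : ∀ n x, ev n x = x n := fun n x => rfl
  let I : Submodule ℝ (lp (fun _ : ℕ => ℝ) p) := ⨅ n ∈ S, (ev n).ker
  have hI : ∀ x, x ∈ I ↔ ∀ n ∈ S, x n = 0 := by
    intro x
    simp [I, Submodule.mem_iInf, hev]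
  refine ⟨I, ?_, ?_, ?_, ?_, ?_⟩
  · have : (I : Set (lp (fun _ : ℕ => ℝ) p)) = ⋂ n ∈ S, {x | ev n x = 0} := by
      ext x
      simp [hI, hev]
    rw [this]
    exact isClosed_biInter fun n _ => isClosed_eq (ev n).continuous continuous_const
  · intro hbot
    have hm : e p b ∈ I := (hI _).2 fun n hn => aux_e_ne p (fun hh => hb (hh ▸ hn))
    rw [hbot, Submodule.mem_bot] at hm
    have := aux_e_self p b
    rw [hm] at this
    simp at this
  · intro htop
    have hm : e p a ∈ I := by rw [htop]; trivial
    have := (hI _).1 hm a ha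
    rw [aux_e_self] at this
    exact one_ne_zero this
  · intro x y hxy hy
    rw [hI] at hy ⊢
    intro n hn
    have := hxy n
    rw [hy n hn, abs_zero] at this
    exact abs_nonpos_iff.1 this
  · intro x hx
    rw [hI] at hx ⊢
    intro n hn
    have hs := ((aux_hasSum p hp x).mapL T).mapL (ev n)
    have hz : (fun m => ev n (T (x m • e p m))) = fun _ => 0 := by
      funext m
      rw [map_smul, map_smul, hev]
      by_cases hm : m ∈ S
      · rw [hx m hm, zero_smul]
      · rw [h n hn m hm, smul_zero]
    rw [hz] at hs
    exact hs.unique hasSum_zero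

theorem aux_e_mem (p : ℝ≥0∞) [Fact (1 ≤ p)] (I : Submodule ℝ (lp (fun _ : ℕ => ℝ) p))
    (hI : ∀ x y : lp (fun _ : ℕ => ℝ) p, (∀ n, |x n| ≤ |y n|) → y ∈ I → x ∈ I)
    (y : lp (fun _ : ℕ => ℝ) p) (hy : y ∈ I) (n : ℕ) (hn : y n ≠ 0) : e p n ∈ I := by
  refine hI _ ((y n)⁻¹ • y) (fun m => ?_) (I.smul_mem _ hy)
  by_cases hm : m = n
  · subst hm
    rw [aux_e_self, lp.coeFn_smul, Pi.smul_apply, smul_eq_mul, inv_mul_cancel₀ hn]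
  · rw [aux_e_ne p hm, abs_zero]
    exact abs_nonneg _

/-- A positive tridiagonal operator on `ℓᵖ` (`1 ≤ p < ∞`) has no non-trivial
closed invariant ideal if and only if both the sub-diagonal and the
super-diagonal of its matrix have no null elements. -/
theorem stmt_11 (p : ℝ≥0∞) [Fact (1 ≤ p)] (hp : p ≠ ∞)
    (T : lp (fun _ : ℕ => ℝ) p →L[ℝ] lp (fun _ : ℕ => ℝ) p)
    (hTpos : IsPositiveOp p T) (htri : IsTridiagonal p T) :
    ¬ HasNontrivialClosedInvariantIdeal p T ↔
      (∀ n : ℕ, 0 < (T (e p n)) (n + 1)) ∧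
      (∀ n : ℕ, 0 < (T (e p (n + 1))) n) := by
  constructor
  · intro hno
    have hpos : ∀ m n, 0 ≤ (T (e p m)) n := fun m n => by
      refine hTpos _ (fun k => ?_) n
      by_cases hk : k = m
      · subst hk
        rw [aux_e_self]
        exact zero_le_one
      · rw [aux_e_ne p hk]
    constructor
    · intro k
      refine lt_of_le_of_ne (hpos _ _) fun h0 => hno ?_
      refine aux_ideal p hp T {n | k < n} (k + 1) k (by simp) (by simp) ?_
      intro n hn m hm
      simp only [Set.mem_setOf_eq, not_lt] at hn hm
      by_cases hc : n = k + 1 ∧ m = k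
      · rw [hc.1, hc.2]; exact h0.symm
      · exact htri n m (by omega)
    · intro k
      refine lt_of_le_of_ne (hpos _ _) fun h0 => hno ?_
      refine aux_ideal p hp T {n | n ≤ k} k (k + 1) (by simp) (by simp) ?_
      intro n hn m hm
      simp only [Set.mem_setOf_eq, not_le] at hn hm
      by_cases hc : n = k ∧ m = k + 1
      · rw [hc.1, hc.2]; exact h0.symm
      · exact htri n m (by omega)
  · rintro ⟨hsub, hsup⟩ ⟨I, hcl, hbot, htop, hid, hinv⟩
    obtain ⟨y, hy, hy0⟩ := I.ne_bot_iff.1 hbot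
    have : ∃ n, y n ≠ 0 := by
      by_contra! hc
      exact hy0 (lp.ext (funext hc))
    obtain ⟨n, hn⟩ := this
    have hen : e p n ∈ I := aux_e_mem p I hid y hy n hn
    have hup : ∀ k, e p k ∈ I → e p (k + 1) ∈ I := fun k hk =>
      aux_e_mem p I hid _ (hinv _ hk) _ (hsub k).ne'
    have hdown : ∀ k, e p (k + 1) ∈ I → e p k ∈ I := fun k hk =>
      aux_e_mem p I hid _ (hinv _ hk) _ (hsup k).ne'
    have h0 : e p 0 ∈ I := by
      clear hn
      induction n with
      | zero => exact hen
      | succ k ih => exact ih (hdown k hen)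
    have hall : ∀ k, e p k ∈ I := fun k => by
      induction k with
      | zero => exact h0
      | succ k ih => exact hup k ih
    apply htop
    rw [Submodule.eq_top_iff']
    intro x
    exact hcl.mem_of_tendsto (aux_hasSum p hp x)
      (Filter.Eventually.of_forall fun s => I.sum_mem fun m _ => I.smul_mem _ (hall m))
end
end

section
/- Let T be a positive bounded linear operator on ℓ^p (1 ≤ p < ∞) whose matrix a_{n,m} = (T e_m) n is tridiagonal, and suppose a_{n₀, n₀+1} = 0 for some n₀ ∈ ℕ, i.e., coordinate n₀ of T e_{n₀+1} vanishes. Then for every k ≥ 1, every i ≤ n₀ and every j ≥ n₀ + 1, the (i, j) entry of the matrix of T^k vanishes: (T^k e_j) i = 0. -/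
open scoped ENNReal

noncomputable section

/-- If `T` is positive and tridiagonal on `ℓᵖ` (`1 ≤ p < ∞`) with
`a_{n₀,n₀+1} = 0`, then the `(i, j)` entry of the matrix of `T^k` vanishes for
every `k ≥ 1`, `i ≤ n₀` and `j ≥ n₀ + 1`. -/
theorem stmt_15 (p : ℝ≥0∞) [Fact (1 ≤ p)] (hp : p ≠ ∞)
    (T : lp (fun _ : ℕ => ℝ) p →L[ℝ] lp (fun _ : ℕ => ℝ) p)
    (hTpos : IsPositiveOp p T) (htri : IsTridiagonal p T)
    (n₀ : ℕ) (h : (T (e p (n₀ + 1))) n₀ = 0) :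
    ∀ k : ℕ, 1 ≤ k → ∀ i j : ℕ, i ≤ n₀ → n₀ + 1 ≤ j →
      ((T ^ k) (e p j)) i = 0 := by
  have key : ∀ x : lp (fun _ : ℕ => ℝ) p, (∀ i, i ≤ n₀ → x i = 0) →
      ∀ i, i ≤ n₀ → (T x) i = 0 := by
    intro x hx i hi
    have h1 := lp.hasSum_single hp x
    have h2 := ((lp.evalCLM ℝ (fun _ : ℕ => ℝ) p i).comp T).hasSum h1
    have h3 : ∀ m, ((lp.evalCLM ℝ (fun _ : ℕ => ℝ) p i).comp T)
        (lp.single p m (x m)) = 0 := by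
      intro m
      have h4 : lp.single p m (x m) = x m • e p m := by
        rw [e, ← lp.single_smul, smul_eq_mul, mul_one]
      rw [h4, map_smul]
      change x m • (T (e p m)) i = 0
      by_cases hm : m ≤ n₀
      · rw [hx m hm, zero_smul]
      · have h5 : (T (e p m)) i = 0 := by
          by_cases hc : i + 1 < m
          · exact htri i m (Or.inr hc)
          · obtain rfl : i = n₀ := by omega
            obtain rfl : m = i + 1 := by omega
            exact h
        rw [h5, smul_zero]
    have h6 : HasSum (fun _ : ℕ => (0 : ℝ)) ((T x) i) := by
      refine HasSum.congr_fun ?_ (fun m => (h3 m).symm) <;> exact h2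
    exact h6.unique hasSum_zero
  have all : ∀ k : ℕ, ∀ i j : ℕ, i ≤ n₀ → n₀ + 1 ≤ j → ((T ^ k) (e p j)) i = 0 := by
    intro k
    induction k with
    | zero =>
      intro i j hi hj
      have : i ≠ j := by omega
      simp [e, lp.single_apply, this]
    | succ k ih =>
      intro i j hi hj
      rw [pow_succ']
      exact key _ (fun i' hi' => ih i' j hi' hj) i hi
  exact fun k _ => all k
end
end

section
/- Let T be the bounded linear operator on ℓ^p (1 ≤ p < ∞) defined by (Tx) 0 = x 1 and (Tx) n = x (n−1) + x (n+1) for n ≥ 1. Then T is a positive operator with no non-trivial closed invariant ideal. -/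
open scoped ENNReal

noncomputable section

/-- The operator on `ℓᵖ` (`1 ≤ p < ∞`) given by `(Tx)₀ = x₁` and
`(Tx)ₙ = x_{n-1} + x_{n+1}` for `n ≥ 1` is positive and has no non-trivial
closed invariant ideal. -/
theorem stmt_16 (p : ℝ≥0∞) [Fact (1 ≤ p)] (hp : p ≠ ∞)
    (T : lp (fun _ : ℕ => ℝ) p →L[ℝ] lp (fun _ : ℕ => ℝ) p)
    (hT0 : ∀ x : lp (fun _ : ℕ => ℝ) p, (T x) 0 = x 1)
    (hT1 : ∀ x : lp (fun _ : ℕ => ℝ) p, ∀ n : ℕ,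
      (T x) (n + 1) = x n + x (n + 2)) :
    IsPositiveOp p T ∧ ¬ HasNontrivialClosedInvariantIdeal p T := by
  have hes : ∀ n : ℕ, (e p n) n = 1 := fun n => by simp [e]
  have hen : ∀ n m : ℕ, m ≠ n → (e p n) m = 0 := fun n m h => by
    simp [e, lp.single_apply, h]
  have hnn : ∀ n m : ℕ, 0 ≤ (e p n) m := fun n m => by
    by_cases h : m = n
    · subst h; simp [hes]
    · simp [hen n m h]
  refine ⟨?_, ?_⟩
  · intro x hx n
    cases n with
    | zero => rw [hT0]; exact hx 1
    | succ n => rw [hT1]; exact add_nonneg (hx _) (hx _)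
  · rintro ⟨I, hcl, hbot, htop, hid, hinv⟩
    apply htop
    have key : ∀ (y : lp (fun _ : ℕ => ℝ) p) (k : ℕ), y ∈ I → 1 ≤ y k → e p k ∈ I := by
      intro y k hy hk
      refine hid _ y (fun m => ?_) hy
      by_cases h : m = k
      · subst h; rw [hes, abs_one]; exact hk.trans (le_abs_self _)
      · rw [hen k m h, abs_zero]; exact abs_nonneg _
    have hup : ∀ n, e p n ∈ I → e p (n + 1) ∈ I := by
      intro n h
      refine key _ _ (hinv _ h) ?_
      rw [hT1, hes]
      linarith [hnn n (n + 2)]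
    have hdown : ∀ n, e p (n + 1) ∈ I → e p n ∈ I := by
      intro n h
      refine key _ _ (hinv _ h) ?_
      cases n with
      | zero => rw [hT0, hes]
      | succ n => rw [hT1, hes]; linarith [hnn (n + 1 + 1) n]
    obtain ⟨y, hy, hy0⟩ := I.ne_bot_iff.mp hbot
    have hex : ∃ n, y n ≠ 0 := by
      by_contra! h
      exact hy0 (lp.ext (funext h))
    obtain ⟨n, hn⟩ := hex
    have h1 : e p n ∈ I := by
      refine key ((y n)⁻¹ • y) n (I.smul_mem _ hy) ?_
      have : ((y n)⁻¹ • y) n = (y n)⁻¹ * y n := rfl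
      rw [this, inv_mul_cancel₀ hn]
    have h0 : e p 0 ∈ I := by
      clear hn
      induction n with
      | zero => exact h1
      | succ n ih => exact ih (hdown n h1)
    have hall : ∀ n, e p n ∈ I := by
      intro n
      induction n with
      | zero => exact h0
      | succ n ih => exact hup n ih
    rw [eq_top_iff]
    intro x _
    have hs := lp.hasSum_single hp x
    refine hcl.mem_of_tendsto hs (Filter.Eventually.of_forall fun s => ?_)
    refine I.sum_mem fun i _ => ?_
    have : lp.single p i (x i) = (x i) • e p i := by
      rw [e, ← lp.single_smul]; simp
    rw [this]
    exact I.smul_mem _ (hall i)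
end
end

section
/- Let T be a positive bounded linear operator on ℓ^p (1 ≤ p < ∞). Then T has no non-trivial closed invariant ideal if and only if for every pair i ≠ j in ℕ there exists n ≥ 1 such that (T^n e_i) j > 0. -/
open scoped ENNReal

noncomputable section

abbrev Lx (p : ℝ≥0∞) := lp (fun _ : ℕ => ℝ) p

lemma e_self (p : ℝ≥0∞) (i : ℕ) : e p i i = 1 := by simp [e]

lemma e_ne (p : ℝ≥0∞) {i j : ℕ} (h : j ≠ i) : e p i j = 0 := by
  simp [e, h]

lemma e_nonneg (p : ℝ≥0∞) (i j : ℕ) : 0 ≤ e p i j := by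
  by_cases h : j = i
  · subst h; simp [e_self]
  · simp [e_ne p h]

lemma hasSum_e (p : ℝ≥0∞) [Fact (1 ≤ p)] (hp : p ≠ ∞) (x : Lx p) :
    HasSum (fun i => x i • e p i) x := by
  have h := lp.hasSum_single hp x
  convert h using 2 with i
  rw [e, ← lp.single_smul]
  simp

lemma pow_pos_op (p : ℝ≥0∞) [Fact (1 ≤ p)] (T : Lx p →L[ℝ] Lx p)
    (hT : IsPositiveOp p T) (n : ℕ) : IsPositiveOp p (T ^ n) := by
  induction n with
  | zero => intro x hx; simpa using hx
  | succ n ih =>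
    intro x hx
    rw [pow_succ']
    exact hT _ (ih x hx)

lemma e_mem (p : ℝ≥0∞) [Fact (1 ≤ p)] (I : Submodule ℝ (Lx p))
    (hI : ∀ x y : Lx p, (∀ n, |x n| ≤ |y n|) → y ∈ I → x ∈ I)
    (x : Lx p) (hx : x ∈ I) (i : ℕ) (hi : x i ≠ 0) : e p i ∈ I := by
  refine hI _ ((x i)⁻¹ • x) (fun n => ?_) (I.smul_mem _ hx)
  by_cases h : n = i
  · subst h; simp [e_self, hi]
  · rw [e_ne p h, abs_zero]; exact abs_nonneg _

lemma sub_smul_ap (p : ℝ≥0∞) (x y : Lx p) (c : ℝ) (l : ℕ) :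
    (x - c • y) l = x l - c * y l := rfl

/-- A positive operator on `ℓᵖ` (`1 ≤ p < ∞`) has no non-trivial closed
invariant ideal if and only if for every pair `i ≠ j` there exists `n ≥ 1` with
`(Tⁿ eᵢ)ⱼ > 0`. -/
theorem stmt_17 (p : ℝ≥0∞) [Fact (1 ≤ p)] (hp : p ≠ ∞)
    (T : lp (fun _ : ℕ => ℝ) p →L[ℝ] lp (fun _ : ℕ => ℝ) p)
    (hTpos : IsPositiveOp p T) :
    ¬ HasNontrivialClosedInvariantIdeal p T ↔
      ∀ i j : ℕ, i ≠ j → ∃ n : ℕ, 1 ≤ n ∧ 0 < ((T ^ n) (e p i)) j := by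
  constructor
  · intro hno i j hij
    by_contra! hcon
    apply hno
    let S : Set ℕ := {k | ∃ n : ℕ, 0 < ((T ^ n) (e p i)) k}
    have hjS : j ∉ S := by
      rintro ⟨n, hn⟩
      rcases Nat.eq_zero_or_pos n with rfl | h
      · have : e p i j = 0 := e_ne p hij.symm
        simp [this] at hn
      · exact absurd hn (not_lt.mpr (hcon n h))
    have hiS : i ∈ S := ⟨0, by simp [e_self]⟩
    have hS : ∀ m ∈ S, ∀ k, k ∉ S → (T (e p m)) k = 0 := by
      rintro m ⟨n, hn⟩ k hk
      set c := ((T ^ n) (e p i)) m with hc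
      have h1 : ∀ l, 0 ≤ ((T ^ n) (e p i) - c • e p m) l := by
        intro l
        rw [sub_smul_ap]
        by_cases h : l = m
        · subst h; simp [e_self, hc]
        · simpa [e_ne p h] using pow_pos_op p T hTpos n _ (e_nonneg p i) l
      have h2 := hTpos _ h1 k
      have h3 : ((T ^ (n+1)) (e p i)) k ≤ 0 := not_lt.mp (fun h => hk ⟨n+1, h⟩)
      have h4 := hTpos _ (e_nonneg p m) k
      rw [pow_succ'] at h3
      rw [map_sub, map_smul, sub_smul_ap] at h2
      change (T ((T ^ n) (e p i))) k ≤ 0 at h3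
      nlinarith
    let I : Submodule ℝ (lp (fun _ : ℕ => ℝ) p) :=
      { carrier := {x | ∀ k, k ∉ S → x k = 0}
        add_mem' := by
          intro a b ha hb k hk
          simp [ha k hk, hb k hk]
        zero_mem' := by intro k _; simp
        smul_mem' := by
          intro c a ha k hk
          simp [ha k hk] }
    have memI : ∀ x, x ∈ I ↔ ∀ k, k ∉ S → x k = 0 := fun x => Iff.rfl
    refine ⟨I, ?_, ?_, ?_, ?_, ?_⟩
    · have : (I : Set (lp (fun _ : ℕ => ℝ) p)) = ⋂ k, ⋂ (_ : k ∉ S), {x | x k = 0} := by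
        ext x; simp [memI]
      rw [this]
      refine isClosed_iInter fun k => isClosed_iInter fun _ => ?_
      exact isClosed_eq (lp.lipschitzWith_one_eval p k).continuous continuous_const
    · intro h
      have : e p i ∈ I := by
        intro k hk
        exact e_ne p (fun h => hk (h ▸ hiS))
      rw [h, Submodule.mem_bot] at this
      have h1 := e_self p i
      rw [this] at h1
      simp at h1
    · intro h
      have : e p j ∈ I := by rw [h]; trivial
      have h1 := this j hjS
      rw [e_self] at h1
      exact one_ne_zero h1
    · intro x y hxy hy k hk
      have := hxy k
      rw [hy k hk] at this
      simpa using this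
    · intro x hx k hk
      have h := ((hasSum_e p hp x).mapL T).mapL (lp.evalCLM ℝ (fun _ : ℕ => ℝ) p k)
      refine h.unique ?_
      convert hasSum_zero with m
      by_cases hm : m ∈ S
      · have := hS m hm k hk
        simp [lp.evalCLM, this]
      · simp [hx m hm]
  · rintro hcon ⟨I, hcl, hbot, htop, hid, hinv⟩
    obtain ⟨x, hx, hx0⟩ := I.exists_mem_ne_zero_of_ne_bot hbot
    obtain ⟨i, hi⟩ : ∃ i, x i ≠ 0 := by
      by_contra! h
      exact hx0 (lp.ext (funext h))
    have hei := e_mem p I hid x hx i hi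
    have hpow : ∀ n : ℕ, (T ^ n) (e p i) ∈ I := by
      intro n
      induction n with
      | zero => simpa using hei
      | succ n ih => rw [pow_succ']; exact hinv _ ih
    have hall : ∀ j, e p j ∈ I := by
      intro j
      by_cases h : i = j
      · exact h ▸ hei
      · obtain ⟨n, _, hn⟩ := hcon i j h
        exact e_mem p I hid _ (hpow n) j hn.ne'
    apply htop
    rw [eq_top_iff]
    intro y _
    exact hcl.mem_of_tendsto (hasSum_e p hp y)
      (Filter.Eventually.of_forall fun s => I.sum_mem fun k _ => I.smul_mem _ (hall k))
end
end
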